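/- arXiv:math/0605096 — 5 statements merged into one kernel-verified Lean document; each statement's English description precedes it below -/
import Mathlib

section
/- Let n ≥ 1 and let ν ∈ ℝⁿ with ν ≠ 0. Let R := {α ∈ ℤⁿ : ⟨α,ν⟩ = 0} (the resonance module), a subgroup of ℤⁿ, and set k := n − rank(R); then k ≥ 1. There exist vectors u¹,…,uᵏ ∈ ℤⁿ that are linearly independent over ℝ, and real numbers λ₁,…,λ_k, such that ν = λ₁u¹ + ⋯ + λ_k uᵏ and, for every α ∈ R and every j ∈ {1,…,k}, ⟨α, uʲ⟩ = 0. -/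
/-!
Let `φ : ℤⁿ → ℝ`, `φ α = ∑ i, α i * ν i`, and let `L` be its range, the subgroup of `ℝ` generated by
the `ν i`. Then `R = ker φ`, so `L` has rank `n - rank R = k` by rank-nullity; as a finitely
generated torsion-free `ℤ`-module, `L` has a `ℤ`-basis `λ₁, …, λ_k`. Let `u j i` be the `j`-th
coordinate of `ν i = φ (eᵢ)` in this basis, so that `ν = ∑ j, λⱼ uʲ` and the coordinates of `φ α`
are the integers `⟨α, uʲ⟩`. They vanish for `α ∈ R`. Since `φ` maps onto `L`, there are `aʲ ∈ ℤⁿ`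
with `φ aʲ = λⱼ`, i.e. `⟨aʲ, uˡ⟩ = δⱼₗ`, and such a dual family forces the `uʲ` to be linearly
independent over `ℝ`.
-/

/-- Lemma 2.3 (algebraic core): if `ν ∈ ℝⁿ` is nonzero and `R ⊆ ℤⁿ` is its resonance
module, of rank `n - k`, then `ν` is a real linear combination of `k` integral vectors
`u¹, …, uᵏ`, linearly independent over `ℝ`, each orthogonal to all of `R`. -/
theorem stmt2 (n : ℕ) (hn : 1 ≤ n) (ν : Fin n → ℝ) (hν : ν ≠ 0)
    (R : Submodule ℤ (Fin n → ℤ))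
    (hR : ∀ α : Fin n → ℤ, α ∈ R ↔ ∑ i, (α i : ℝ) * ν i = 0)
    (k : ℕ) (hk : k = n - Module.finrank ℤ R) :
    1 ≤ k ∧ ∃ (u : Fin k → (Fin n → ℤ)) (lam : Fin k → ℝ),
      LinearIndependent ℝ (fun j : Fin k => ((fun i => (u j i : ℝ)) : Fin n → ℝ)) ∧
      (∀ i, ν i = ∑ j, lam j * (u j i : ℝ)) ∧
      (∀ α ∈ R, ∀ j, ∑ i, α i * u j i = 0) := by
  let φ : (Fin n → ℤ) →ₗ[ℤ] ℝ := Fintype.linearCombination ℤ ν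
  have hφ : ∀ α, φ α = ∑ i, (α i : ℝ) * ν i := fun α => by
    simp [φ, Fintype.linearCombination_apply]
  have hker : LinearMap.ker φ = R := by
    ext α
    rw [LinearMap.mem_ker, hφ, hR]
  have hrank : Module.finrank ℤ (LinearMap.range φ) = k := by
    have h := Submodule.finrank_quotient_add_finrank (LinearMap.ker φ)
    rw [φ.quotKerEquivRange.finrank_eq, hker, Module.finrank_fin_fun] at h
    omega
  let b : Module.Basis (Fin k) ℤ (LinearMap.range φ) := Module.finBasisOfFinrankEq _ _ hrank
  let u : Fin k → Fin n → ℤ := fun j i => b.repr (φ.rangeRestrict (Pi.single i 1)) j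
  have hu : ∀ α j, b.repr (φ.rangeRestrict α) j = ∑ i, α i * u j i := by
    intro α j
    have hα : α = ∑ i, α i • (Pi.single i 1 : Fin n → ℤ) := by
      simp_rw [← Pi.single_smul, smul_eq_mul, mul_one, Finset.univ_sum_single]
    conv_lhs => rw [hα]
    simp only [map_sum, map_smul, Finsupp.finsetSum_apply, Finsupp.smul_apply, smul_eq_mul, u]
  have hsum : ∀ i, ν i = ∑ j, (b j : ℝ) * (u j i : ℝ) := by
    intro i
    have h := congrArg Subtype.val (b.sum_repr (φ.rangeRestrict (Pi.single i 1)))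
    have h1 : φ (Pi.single i 1) = ν i := by
      simp [φ]
    replace h := h.trans h1
    rw [← h, Submodule.coe_sum]
    exact Finset.sum_congr rfl fun j _ => by
      rw [Submodule.coe_smul, zsmul_eq_mul, mul_comm]
  refine ⟨?_, u, fun j => b j, ?_, hsum, ?_⟩
  · by_contra! h
    obtain rfl : k = 0 := by omega
    exact hν (funext fun i => by simp [hsum i])
  · rw [Fintype.linearIndependent_iff]
    intro c hc j
    -- An integral vector `a` whose pairing with `u l` is `1` for `l = j` and `0` otherwise.
    obtain ⟨a, ha⟩ := φ.surjective_rangeRestrict (b j)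
    have hδ : ∀ l, ∑ i, (a i : ℝ) * (u l i : ℝ) = if j = l then 1 else 0 := by
      intro l
      have h := hu a l
      rw [ha, b.repr_self, Finsupp.single_apply] at h
      have h' := congrArg (Int.cast : ℤ → ℝ) h
      push_cast at h'
      exact h'.symm
    calc c j = ∑ l, c l * ∑ i, (a i : ℝ) * (u l i : ℝ) := by simp [hδ]
      _ = ∑ i, (a i : ℝ) * (∑ l, c l • (fun i => (u l i : ℝ)) : Fin n → ℝ) i := by
        simp only [Finset.sum_apply, Pi.smul_apply, smul_eq_mul, Finset.mul_sum]
        rw [Finset.sum_comm]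
        exact Finset.sum_congr rfl fun _ _ => Finset.sum_congr rfl fun _ _ => by ring
      _ = 0 := by rw [hc]; simp
  · intro α hα j
    have h0 : φ.rangeRestrict α = 0 := Subtype.ext ((hφ α).trans ((hR α).1 hα))
    rw [← hu, h0]
    simp
end

section
/- Let d ≥ 1 be an integer and let g : ℝ^d → ℂ be a smooth function all of whose partial derivatives of every order (including g itself) are bounded. For h > 0 define I_h(g)(ζ) := (πh)^{−d/2} ∫_{ℝ^d} e^{−|w|²/h} g(ζ + w) dw. Then for every integer k ≥ 1 there exists a constant C > 0 such that for all h ∈ (0,1] and all ζ ∈ ℝ^d, | I_h(g)(ζ) − Σ_{j=0}^{k−1} (h/4)^j (Δ^j g)(ζ)/j! | ≤ C h^k, where Δ = Σ_{i=1}^d ∂²/∂w_i² is the Laplacian and Δ^j its j-th iterate. -/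
/-!
After the substitution `w = √h v`, the smoothing `I_h(g)(ζ)` becomes `u_g(√h)`, where
`u_g(s) = π^{-d/2} ∫ e^{-|v|²} g(ζ + s v) dv`. Differentiating under the integral sign and
integrating by parts against `v_i e^{-|v|²} = -½ ∂_i e^{-|v|²}` gives the heat equation in the form
`u_g'(s) = (s/2) u_{Δg}(s)` (`hasDerivAt_gaussMean`), valid for all real `s`, together with
`u_g(0) = g(ζ)`.

Let `R_k[g](s) = u_g(s) - ∑_{j<k} (s²/4)^j Δ^j g(ζ) / j!`. Then `R_{k+1}[g]' = (s/2) R_k[Δg]` and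
`R_{k+1}[g](0) = 0`. Since `Δg` again has bounded derivatives of every order, the mean value
inequality and induction on `k`, starting from `|u_g| ≤ sup |g|`, give `|R_k[g](s)| ≤ C s^{2k}` with
`C` independent of `ζ` (`norm_gaussMean_sub_le`). The claim is the case `s = √h`.
-/

open MeasureTheory

/-- The (coordinate) Laplacian of a function `g : ℝ^d → ℂ`. -/
noncomputable def coordLaplacian {d : ℕ} (g : EuclideanSpace ℝ (Fin d) → ℂ) :
    EuclideanSpace ℝ (Fin d) → ℂ :=
  fun x => ∑ i : Fin d,
    fderiv ℝ (fun y => fderiv ℝ g y (EuclideanSpace.single i 1)) x (EuclideanSpace.single i 1)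

/-- The Gaussian smoothing `I_h(g)(ζ) = (πh)^{-d/2} ∫ e^{-|w|²/h} g(ζ+w) dw`. -/
noncomputable def gaussianSmoothing {d : ℕ} (h : ℝ) (g : EuclideanSpace ℝ (Fin d) → ℂ) :
    EuclideanSpace ℝ (Fin d) → ℂ :=
  fun ζ => ((Real.pi * h) ^ (-(d : ℝ) / 2) : ℝ) •
    ∫ w : EuclideanSpace ℝ (Fin d), Real.exp (-‖w‖ ^ 2 / h) • g (ζ + w)

/-! ### Symbols with bounded derivatives -/

/-- The symbol class: smooth functions all of whose derivatives, including the function itself,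
are bounded. -/
def BddSmooth {d : ℕ} (g : EuclideanSpace ℝ (Fin d) → ℂ) : Prop :=
  ContDiff ℝ (⊤ : ℕ∞) g ∧ ∀ m : ℕ, ∃ M : ℝ, ∀ x, ‖iteratedFDeriv ℝ m g x‖ ≤ M

/-- The rescaled smoothing `u_g(s) = π^{-d/2} ∫ e^{-|v|²} g(ζ + s v) dv`. Unlike `I_h(g)`, it makes
sense for every real `s`, including `s = 0`. -/
noncomputable def gaussMean {d : ℕ} (g : EuclideanSpace ℝ (Fin d) → ℂ)
    (ζ : EuclideanSpace ℝ (Fin d)) (s : ℝ) : ℂ :=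
  (Real.pi ^ (-(d : ℝ) / 2) : ℝ) •
    ∫ v : EuclideanSpace ℝ (Fin d), Real.exp (-‖v‖ ^ 2) • g (ζ + s • v)

namespace BddSmooth

variable {d : ℕ} {g : EuclideanSpace ℝ (Fin d) → ℂ}

lemma fderiv_apply (hg : BddSmooth g) (v : EuclideanSpace ℝ (Fin d)) :
    BddSmooth (fun y => fderiv ℝ g y v) := by
  have hg' : ContDiff ℝ (⊤ : ℕ∞) (fderiv ℝ g) := hg.1.fderiv_right (by simp)
  refine ⟨hg'.clm_apply contDiff_const, fun m => ?_⟩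
  obtain ⟨M, hM⟩ := hg.2 (m + 1)
  refine ⟨‖ContinuousLinearMap.apply ℝ ℂ v‖ * M, fun x => ?_⟩
  have h := (ContinuousLinearMap.apply ℝ ℂ v).iteratedFDeriv_comp_left
    (hg'.contDiffAt (x := x)) (i := m) (by exact_mod_cast le_top)
  have e : (fun y => fderiv ℝ g y v) = (ContinuousLinearMap.apply ℝ ℂ v) ∘ fderiv ℝ g := by
    ext y; simp
  rw [e, h]
  refine (ContinuousLinearMap.norm_compContinuousMultilinearMap_le _ _).trans ?_
  rw [norm_iteratedFDeriv_fderiv]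
  gcongr
  exact hM x

lemma sum {ι : Type*} (s : Finset ι) (f : ι → EuclideanSpace ℝ (Fin d) → ℂ)
    (hf : ∀ i, BddSmooth (f i)) : BddSmooth (fun x => ∑ i ∈ s, f i x) := by
  refine ⟨ContDiff.sum fun i _ => (hf i).1, fun m => ?_⟩
  choose M hM using fun i => (hf i).2 m
  refine ⟨∑ i ∈ s, M i, fun x => ?_⟩
  rw [iteratedFDeriv_fun_sum_apply
    (fun i _ => ((hf i).1.of_le (by exact_mod_cast le_top)).contDiffAt)]
  exact norm_sum_le_of_le _ fun i _ => hM i x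

lemma laplacian (hg : BddSmooth g) : BddSmooth (coordLaplacian g) :=
  sum _ _ fun _ => (hg.fderiv_apply _).fderiv_apply _

lemma bounded (hg : BddSmooth g) : ∃ M : ℝ, 0 ≤ M ∧ ∀ x, ‖g x‖ ≤ M := by
  obtain ⟨M, hM⟩ := hg.2 0
  simp only [norm_iteratedFDeriv_zero] at hM
  exact ⟨M, (norm_nonneg _).trans (hM 0), hM⟩

lemma fderiv_bounded (hg : BddSmooth g) : ∃ M : ℝ, 0 ≤ M ∧ ∀ x, ‖fderiv ℝ g x‖ ≤ M := by
  obtain ⟨M, hM⟩ := hg.2 1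
  simp only [norm_iteratedFDeriv_one] at hM
  exact ⟨M, (norm_nonneg _).trans (hM 0), hM⟩

lemma differentiable (hg : BddSmooth g) : Differentiable ℝ g := hg.1.differentiable (by simp)

end BddSmooth

section Gaussian

variable {d : ℕ}

/-! ### Gaussian integrals and integration by parts -/

lemma integral_gauss : ∫ v : EuclideanSpace ℝ (Fin d), Real.exp (-‖v‖ ^ 2)
    = Real.pi ^ ((d : ℝ) / 2) := by
  simpa using GaussianFourier.integral_rexp_neg_mul_sq_norm
    (V := EuclideanSpace ℝ (Fin d)) (b := 1) one_pos

lemma rpow_neg_half_mul_rpow_half (x : ℝ) (hx : 0 < x) : x ^ (-(d : ℝ) / 2) * x ^ ((d : ℝ) / 2) = 1 := by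
  rw [← Real.rpow_add hx, neg_div, neg_add_cancel, Real.rpow_zero]

lemma integrable_gauss {b : ℝ} (hb : 0 < b) :
    Integrable (fun v : EuclideanSpace ℝ (Fin d) => Real.exp (-b * ‖v‖ ^ 2)) := by
  refine .of_integral_ne_zero ?_
  rw [GaussianFourier.integral_rexp_neg_mul_sq_norm hb]
  exact (Real.rpow_pos_of_pos (by positivity) _).ne'

lemma integrable_norm_mul_gauss :
    Integrable (fun v : EuclideanSpace ℝ (Fin d) => ‖v‖ * Real.exp (-‖v‖ ^ 2)) := by
  refine (integrable_gauss (d := d) (b := 1 / 2) (by norm_num)).mono'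
    (by fun_prop) (.of_forall fun v => ?_)
  rw [Real.norm_of_nonneg (by positivity)]
  -- `t ≤ 1 + t² / 2 ≤ e^{t² / 2}`
  have h1 : ‖v‖ ≤ Real.exp (‖v‖ ^ 2 / 2) := by
    nlinarith [Real.add_one_le_exp (‖v‖ ^ 2 / 2), sq_nonneg (‖v‖ - 1)]
  calc ‖v‖ * Real.exp (-‖v‖ ^ 2) ≤ Real.exp (‖v‖ ^ 2 / 2) * Real.exp (-‖v‖ ^ 2) := by gcongr
    _ = _ := by rw [← Real.exp_add]; ring_nf

/-- If `|F| ≤ M (1 + |v|)` then `e^{-|v|²} F` is integrable. -/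
lemma integrable_gauss_smul {F : EuclideanSpace ℝ (Fin d) → ℂ} (hF : Continuous F) (M : ℝ)
    (hM : ∀ v, ‖F v‖ ≤ M * (1 + ‖v‖)) :
    Integrable (fun v => Real.exp (-‖v‖ ^ 2) • F v) := by
  have h1 := integrable_gauss (d := d) (b := 1) one_pos
  refine ((h1.add integrable_norm_mul_gauss).const_mul M).mono'
    (by fun_prop) (.of_forall fun v => ?_)
  rw [norm_smul, Real.norm_of_nonneg (Real.exp_pos _).le]
  calc Real.exp (-‖v‖ ^ 2) * ‖F v‖ ≤ Real.exp (-‖v‖ ^ 2) * (M * (1 + ‖v‖)) := by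
        gcongr; exact hM v
    _ = _ := by simp only [Pi.add_apply, neg_mul, one_mul]; ring

lemma integrable_gauss_smul_of_bdd {F : EuclideanSpace ℝ (Fin d) → ℂ} (hF : Continuous F) (M : ℝ)
    (hM : ∀ v, ‖F v‖ ≤ M) : Integrable (fun v => Real.exp (-‖v‖ ^ 2) • F v) :=
  integrable_gauss_smul hF M fun v => (hM v).trans <|
    le_mul_of_one_le_right ((norm_nonneg _).trans (hM v)) (by simp)

lemma hasFDerivAt_gauss (v : EuclideanSpace ℝ (Fin d)) :
    HasFDerivAt (fun v : EuclideanSpace ℝ (Fin d) => Real.exp (-‖v‖ ^ 2))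
      (Real.exp (-‖v‖ ^ 2) • -((2 : ℕ) • (innerSL ℝ v : EuclideanSpace ℝ (Fin d) →L[ℝ] ℝ))) v := by
  have h := (hasStrictFDerivAt_norm_sq v).hasFDerivAt
  exact HasFDerivAt.exp h.fun_neg

lemma fderiv_gauss_apply_single (v : EuclideanSpace ℝ (Fin d)) (i : Fin d) :
    fderiv ℝ (fun v : EuclideanSpace ℝ (Fin d) => Real.exp (-‖v‖ ^ 2)) v
      (EuclideanSpace.single i 1) = -(2 * (Real.exp (-‖v‖ ^ 2) * v i)) := by
  rw [(hasFDerivAt_gauss v).fderiv]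
  simp [EuclideanSpace.inner_single_right]
  ring

lemma hasFDerivAt_comp_affine {f : EuclideanSpace ℝ (Fin d) → ℂ} (hf : Differentiable ℝ f)
    (ζ : EuclideanSpace ℝ (Fin d)) (s : ℝ) (v : EuclideanSpace ℝ (Fin d)) :
    HasFDerivAt (fun v => f (ζ + s • v)) (s • fderiv ℝ f (ζ + s • v)) v := by
  have h := (hf (ζ + s • v)).hasFDerivAt.comp v
    (((hasFDerivAt_id v).const_smul s).const_add ζ)
  refine h.congr_fderiv ?_
  ext w
  simp

/-- Gaussian integration by parts: `∫ v_i e^{-|v|²} f(ζ + s v) = (s/2) ∫ e^{-|v|²} ∂_i f(ζ + s v)`. -/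
lemma integral_coord_mul_gauss {f : EuclideanSpace ℝ (Fin d) → ℂ} (hf : BddSmooth f)
    (ζ : EuclideanSpace ℝ (Fin d)) (s : ℝ) (i : Fin d) :
    ∫ v : EuclideanSpace ℝ (Fin d), Real.exp (-‖v‖ ^ 2) • (v i • f (ζ + s • v))
      = (s / 2) • ∫ v : EuclideanSpace ℝ (Fin d), Real.exp (-‖v‖ ^ 2) •
          fderiv ℝ f (ζ + s • v) (EuclideanSpace.single i 1) := by
  have hc : Continuous f := hf.1.continuous
  have hf1 := hf.fderiv_apply (EuclideanSpace.single i 1)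
  have hc1 : Continuous (fun y => fderiv ℝ f y (EuclideanSpace.single i 1)) := hf1.1.continuous
  obtain ⟨M, hM0, hM⟩ := hf.bounded
  obtain ⟨M1, -, hM1⟩ := hf1.bounded
  have I0 := integrable_gauss_smul_of_bdd (F := fun v => f (ζ + s • v)) (by fun_prop) M
    fun v => hM _
  have I1 := integrable_gauss_smul_of_bdd
    (F := fun v => fderiv ℝ f (ζ + s • v) (EuclideanSpace.single i 1))
    (hc1.comp (by fun_prop)) M1 fun v => hM1 _
  have I2 := integrable_gauss_smul (F := fun v => v i • f (ζ + s • v)) (by fun_prop) M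
    fun v => by
      rw [norm_smul, mul_comm]
      have := PiLp.norm_apply_le v i
      gcongr
      · exact hM _
      · linarith
  have e (v : EuclideanSpace ℝ (Fin d)) := (hasFDerivAt_comp_affine hf.differentiable ζ s v).fderiv
  have key := integral_smul_fderiv_eq_neg_fderiv_smul_of_integrable (μ := volume)
    (f := fun v : EuclideanSpace ℝ (Fin d) => Real.exp (-‖v‖ ^ 2))
    (g := fun v => f (ζ + s • v)) (v := EuclideanSpace.single i 1)
    (by
      simp only [fderiv_gauss_apply_single]
      convert I2.smul (-2 : ℝ) using 2 with v
      simp only [Pi.smul_apply, smul_smul]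
      congr 1; ring)
    (by
      simp only [e]
      convert I1.smul s using 2 with v
      simp only [Pi.smul_apply, _root_.smul_apply]
      rw [smul_comm])
    I0 (fun v _ => (hasFDerivAt_gauss v).differentiableAt)
    (fun v _ => (hasFDerivAt_comp_affine hf.differentiable ζ s v).differentiableAt)
  simp only [fderiv_gauss_apply_single, e] at key
  have l : ∀ v : EuclideanSpace ℝ (Fin d), Real.exp (-‖v‖ ^ 2) •
      ((s • fderiv ℝ f (ζ + s • v)) (EuclideanSpace.single i 1)) =
      s • (Real.exp (-‖v‖ ^ 2) • fderiv ℝ f (ζ + s • v) (EuclideanSpace.single i 1)) := fun v => by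
    rw [_root_.smul_apply, smul_comm]
  have r : ∀ v : EuclideanSpace ℝ (Fin d), -(2 * (Real.exp (-‖v‖ ^ 2) * v i)) • f (ζ + s • v) =
      (-2 : ℝ) • (Real.exp (-‖v‖ ^ 2) • (v i • f (ζ + s • v))) := fun v => by
    simp only [smul_smul]; congr 1; ring
  simp only [l, r, integral_smul] at key
  rw [div_eq_inv_mul, mul_smul, key, neg_smul, neg_neg, smul_smul]
  norm_num

/-! ### The heat equation and the expansion -/

/-- The heat equation `u_g'(s) = (s/2) u_{Δg}(s)`. -/
lemma hasDerivAt_gaussMean {g : EuclideanSpace ℝ (Fin d) → ℂ} (hg : BddSmooth g)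
    (ζ : EuclideanSpace ℝ (Fin d)) (s : ℝ) :
    HasDerivAt (gaussMean g ζ) ((s / 2) • gaussMean (coordLaplacian g) ζ s) s := by
  have hc : Continuous g := hg.1.continuous
  have hc' : Continuous (fderiv ℝ g) := hg.1.continuous_fderiv (by simp)
  obtain ⟨M, hM0, hM⟩ := hg.bounded
  obtain ⟨M1, hM10, hM1⟩ := hg.fderiv_bounded
  have hd := (hasDerivAt_integral_of_dominated_loc_of_deriv_le (μ := volume)
    (F := fun s (v : EuclideanSpace ℝ (Fin d)) => Real.exp (-‖v‖ ^ 2) • g (ζ + s • v))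
    (F' := fun s v => Real.exp (-‖v‖ ^ 2) • fderiv ℝ g (ζ + s • v) v)
    (bound := fun v => M1 * (‖v‖ * Real.exp (-‖v‖ ^ 2)))
    (x₀ := s) (s := Set.univ) Filter.univ_mem
    (.of_forall fun s => Continuous.aestronglyMeasurable (by fun_prop))
    (integrable_gauss_smul_of_bdd (by fun_prop) M fun v => hM _)
    (Continuous.aestronglyMeasurable (by fun_prop))
    (.of_forall fun v t _ => by
      rw [norm_smul, Real.norm_of_nonneg (Real.exp_pos _).le]
      calc _ ≤ Real.exp (-‖v‖ ^ 2) * (M1 * ‖v‖) := by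
            gcongr
            exact (fderiv ℝ g (ζ + t • v)).le_of_opNorm_le (hM1 _) v
        _ = _ := by ring)
    (integrable_norm_mul_gauss.const_mul M1)
    (.of_forall fun v t _ => by
      have h1 : HasDerivAt (fun t : ℝ => ζ + t • v) v t := by
        simpa using ((hasDerivAt_id t).smul_const v).const_add ζ
      have h2 : HasDerivAt (fun t : ℝ => g (ζ + t • v)) (fderiv ℝ g (ζ + t • v) v) t :=
        (hg.differentiable _).hasFDerivAt.comp_hasDerivAt t h1
      exact h2.const_smul (Real.exp (-‖v‖ ^ 2)))).2
  have key : ∫ v : EuclideanSpace ℝ (Fin d), Real.exp (-‖v‖ ^ 2) • fderiv ℝ g (ζ + s • v) v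
      = (s / 2) • ∫ v : EuclideanSpace ℝ (Fin d),
          Real.exp (-‖v‖ ^ 2) • coordLaplacian g (ζ + s • v) := by
    have hi (i : Fin d) := hg.fderiv_apply (EuclideanSpace.single i 1)
    have hii (i : Fin d) := (hi i).fderiv_apply (EuclideanSpace.single i 1)
    have e1 (v : EuclideanSpace ℝ (Fin d)) :
        Real.exp (-‖v‖ ^ 2) • fderiv ℝ g (ζ + s • v) v = ∑ i, Real.exp (-‖v‖ ^ 2) •
          (v i • fderiv ℝ g (ζ + s • v) (EuclideanSpace.single i 1)) := by
      rw [← Finset.smul_sum]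
      congr 1
      have hv : v = ∑ i, v i • EuclideanSpace.single i (1 : ℝ) := by
        simpa using ((EuclideanSpace.basisFun (Fin d) ℝ).sum_repr v).symm
      conv_lhs => rw [hv, map_sum]
      simp only [map_smul, ← hv]
    simp only [e1, coordLaplacian, Finset.smul_sum]
    rw [integral_finsetSum, integral_finsetSum, Finset.smul_sum]
    · exact Finset.sum_congr rfl fun i _ => integral_coord_mul_gauss (hi i) ζ s i
    · intro i _
      obtain ⟨K, -, hK⟩ := (hii i).bounded
      exact integrable_gauss_smul_of_bdd ((hii i).1.continuous.comp (by fun_prop)) K fun v => hK _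
    · intro i _
      obtain ⟨K, hK0, hK⟩ := (hi i).bounded
      refine integrable_gauss_smul (by fun_prop) K fun v => ?_
      rw [norm_smul, mul_comm]
      have := PiLp.norm_apply_le v i
      gcongr
      · exact hK _
      · linarith
  rw [key] at hd
  have := hd.const_smul (Real.pi ^ (-(d : ℝ) / 2) : ℝ)
  rw [smul_comm] at this
  exact this

lemma gaussMean_zero (g : EuclideanSpace ℝ (Fin d) → ℂ) (ζ : EuclideanSpace ℝ (Fin d)) :
    gaussMean g ζ 0 = g ζ := by
  simp only [gaussMean, zero_smul, add_zero]
  rw [integral_smul_const, integral_gauss, smul_smul, rpow_neg_half_mul_rpow_half _ Real.pi_pos, one_smul]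

lemma norm_gaussMean_le {g : EuclideanSpace ℝ (Fin d) → ℂ} {M : ℝ} (hM : ∀ x, ‖g x‖ ≤ M)
    (ζ : EuclideanSpace ℝ (Fin d)) (s : ℝ) : ‖gaussMean g ζ s‖ ≤ M := by
  have hpi : 0 ≤ Real.pi ^ (-(d : ℝ) / 2) := by positivity
  have h1 : Integrable (fun v : EuclideanSpace ℝ (Fin d) => Real.exp (-‖v‖ ^ 2)) := by
    simpa using integrable_gauss (d := d) (b := 1) one_pos
  rw [gaussMean, norm_smul, Real.norm_of_nonneg hpi]
  have : ‖∫ v : EuclideanSpace ℝ (Fin d), Real.exp (-‖v‖ ^ 2) • g (ζ + s • v)‖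
      ≤ ∫ v : EuclideanSpace ℝ (Fin d), Real.exp (-‖v‖ ^ 2) * M := by
    refine norm_integral_le_of_norm_le (h1.mul_const M) (.of_forall fun v => ?_)
    rw [norm_smul, Real.norm_of_nonneg (Real.exp_pos _).le]
    gcongr
    exact hM _
  rw [integral_mul_const, integral_gauss] at this
  calc _ ≤ Real.pi ^ (-(d : ℝ) / 2) * (Real.pi ^ ((d : ℝ) / 2) * M) := by gcongr
    _ = M := by rw [← mul_assoc, rpow_neg_half_mul_rpow_half _ Real.pi_pos, one_mul]

/-- The substitution `w = √h v`. -/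
lemma gaussianSmoothing_eq_gaussMean (g : EuclideanSpace ℝ (Fin d) → ℂ)
    (ζ : EuclideanSpace ℝ (Fin d)) {h : ℝ} (hh : 0 < h) :
    gaussianSmoothing h g ζ = gaussMean g ζ (√h) := by
  have hs : 0 < √h := Real.sqrt_pos.2 hh
  have sub := Measure.integral_comp_smul (volume : Measure (EuclideanSpace ℝ (Fin d)))
    (fun w => Real.exp (-‖w‖ ^ 2 / h) • g (ζ + w)) (√h)
  have e (v : EuclideanSpace ℝ (Fin d)) : -‖√h • v‖ ^ 2 / h = -‖v‖ ^ 2 := by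
    rw [norm_smul, mul_pow, Real.norm_of_nonneg hs.le, Real.sq_sqrt hh.le]
    field_simp
  simp only [e] at sub
  rw [gaussMean, sub, gaussianSmoothing, smul_smul, finrank_euclideanSpace_fin]
  congr 1
  rw [Real.mul_rpow Real.pi_pos.le hh.le, abs_of_nonneg (by positivity), Real.sqrt_eq_rpow,
    ← Real.rpow_natCast, ← Real.rpow_mul hh.le, ← Real.rpow_neg hh.le]
  ring_nf

/-- The derivative in `s` of the Taylor polynomial `∑_{j ≤ k} (s²/4)^j a_j / j!` is `s/2` times
`∑_{j < k} (s²/4)^j a_{j+1} / j!`. -/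
lemma hasDerivAt_heatPoly (a : ℕ → ℂ) (k : ℕ) (s : ℝ) :
    HasDerivAt (fun s : ℝ => ∑ j ∈ Finset.range (k + 1),
        (((s ^ 2 / 4) ^ j : ℝ) : ℂ) * a j / (j.factorial : ℂ))
      ((s / 2) • ∑ j ∈ Finset.range k,
        (((s ^ 2 / 4) ^ j : ℝ) : ℂ) * a (j + 1) / (j.factorial : ℂ)) s := by
  simp only [Finset.sum_range_succ']
  rw [Finset.smul_sum]
  simp only [pow_zero]
  refine HasDerivAt.add_const _ (HasDerivAt.fun_sum fun j _ => ?_)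
  have h1 : HasDerivAt (fun s : ℝ => (s ^ 2 / 4) ^ (j + 1))
      (((j + 1 : ℕ) : ℝ) * (s ^ 2 / 4) ^ j * (s / 2)) s := by
    refine (((hasDerivAt_pow 2 s).div_const 4).fun_pow (j + 1)).congr_deriv ?_
    rw [Nat.add_sub_cancel]
    ring
  refine ((h1.ofReal_comp.mul_const (a (j + 1))).div_const
    (((j + 1).factorial : ℕ) : ℂ)).congr_deriv ?_
  have hj : (j.factorial : ℂ) ≠ 0 := by exact_mod_cast j.factorial_ne_zero
  have hj' : ((j : ℂ) + 1) ≠ 0 := by exact_mod_cast j.succ_ne_zero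
  rw [Complex.real_smul, Nat.factorial_succ]
  push_cast
  field_simp

/-- The Taylor remainder of `u_g` is `O(s^{2k})`, uniformly in `ζ`. -/
lemma norm_gaussMean_sub_le (k : ℕ) : ∀ g : EuclideanSpace ℝ (Fin d) → ℂ, BddSmooth g →
    ∃ C : ℝ, 0 ≤ C ∧ ∀ s : ℝ, 0 ≤ s → ∀ ζ,
      ‖gaussMean g ζ s - ∑ j ∈ Finset.range k,
        (((s ^ 2 / 4) ^ j : ℝ) : ℂ) * (coordLaplacian^[j] g) ζ / (j.factorial : ℂ)‖
        ≤ C * (s ^ 2) ^ k := by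
  induction k with
  | zero =>
    intro g hg
    obtain ⟨M, hM0, hM⟩ := hg.bounded
    exact ⟨M, hM0, fun s _ ζ => by simpa using norm_gaussMean_le hM ζ s⟩
  | succ k ih =>
    intro g hg
    obtain ⟨C, hC0, hC⟩ := ih _ hg.laplacian
    refine ⟨C / 2, by positivity, fun s hs ζ => ?_⟩
    have hderiv (t : ℝ) := (hasDerivAt_gaussMean hg ζ t).sub
      (hasDerivAt_heatPoly (fun j => (coordLaplacian^[j] g) ζ) k t)
    have hmv := Convex.norm_image_sub_le_of_norm_hasDerivWithin_le (C := s / 2 * (C * (s ^ 2) ^ k))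
      (fun t (_ : t ∈ Set.Icc 0 s) => (hderiv t).hasDerivWithinAt)
      (fun t ht => by
        have ht0 : 0 ≤ t := ht.1
        have hts : t ≤ s := ht.2
        rw [← smul_sub, norm_smul, Real.norm_of_nonneg (by positivity)]
        have h2 := hC t ht0 ζ
        simp only [← Function.iterate_succ_apply] at h2
        have h3 : C * (t ^ 2) ^ k ≤ C * (s ^ 2) ^ k := by gcongr
        gcongr
        exact h2.trans h3)
      (convex_Icc 0 s) (Set.left_mem_Icc.2 hs) (Set.right_mem_Icc.2 hs)
    -- the remainder vanishes at `s = 0`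
    have h0 : gaussMean g ζ 0 - ∑ j ∈ Finset.range (k + 1),
        ((((0 : ℝ) ^ 2 / 4) ^ j : ℝ) : ℂ) * (coordLaplacian^[j] g) ζ / (j.factorial : ℂ) = 0 := by
      rw [Finset.sum_range_succ', gaussMean_zero]
      simp
    simp only [Pi.sub_apply] at hmv
    rw [h0, sub_zero, sub_zero, Real.norm_of_nonneg hs] at hmv
    refine hmv.trans (le_of_eq ?_)
    ring

end Gaussian

/-- Theorem 5.2 (analytic content): for a smooth symbol `g` with all derivatives bounded,
the Gaussian smoothing `I_h(g)` admits the heat-semigroup expansion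
`I_h(g) ~ Σ_j (h/4)^j Δ^j g / j!`, with remainder `O(h^k)` uniformly on `ℝ^d`. -/
theorem stmt3 (d : ℕ) (hd : 1 ≤ d) (g : EuclideanSpace ℝ (Fin d) → ℂ)
    (hg : ContDiff ℝ (⊤ : ℕ∞) g)
    (hbd : ∀ m : ℕ, ∃ M : ℝ, ∀ x, ‖iteratedFDeriv ℝ m g x‖ ≤ M) :
    ∀ k : ℕ, 1 ≤ k → ∃ C > 0, ∀ h ∈ Set.Ioc (0 : ℝ) 1, ∀ ζ,
      ‖gaussianSmoothing h g ζ -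
          ∑ j ∈ Finset.range k,
            (((h / 4) ^ j : ℝ) : ℂ) * (coordLaplacian^[j] g) ζ / (j.factorial : ℂ)‖
        ≤ C * h ^ k := by
  intro k _
  obtain ⟨C, hC0, hC⟩ := norm_gaussMean_sub_le k g ⟨hg, hbd⟩
  refine ⟨C + 1, by positivity, fun h hh ζ => ?_⟩
  have hpos : 0 < h := hh.1
  have := hC (√h) (Real.sqrt_nonneg h) ζ
  rw [Real.sq_sqrt hpos.le] at this
  rw [gaussianSmoothing_eq_gaussMean g ζ hpos]
  refine this.trans ?_
  gcongr
  linarith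
end

section
/- Let d ≥ 1 and ℓ ≥ 0 be integers. Let k : ℝ^d × [0,1] → ℂ be a smooth function (smooth up to the boundary ħ = 0, e.g. the restriction of a smooth function on ℝ^d × ℝ) whose support is contained in K × [0,1] for some compact set K ⊆ ℝ^d. Assume that ∂_z^α ∂_ħ^j k(0,0) = 0 for every multi-index α ∈ ℕ^d and every j ∈ ℕ with |α| + 2j < ℓ. Then there exists C > 0 such that |k(z,ħ)| ≤ C (|z| + √ħ)^ℓ for all z ∈ ℝ^d and all ħ ∈ [0,1]. -/
/-!
The weighted Taylor estimate follows by strong induction on the weight `ℓ`, from the splitting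
`f(z,t) = (f(z,t) - f(z,0)) + (f(z,0) - f(0,0)) + f(0,0)`.
If `f` is flat of weight `ℓ ≥ 1`, then `f(0,0) = 0`, while `∂_ħ f` is flat of weight `ℓ - 2` and each
`∂_{z_i} f` is flat of weight `ℓ - 1`. The mean value inequality together with the induction
hypothesis bounds the first difference by `t (|z| + √t)^(ℓ-2)` and the second by `|z| |z|^(ℓ-1)`, up
to constants that are uniform for `z` in a ball (`exists_weighted_bound`). Compactness of the
support in `z` makes the estimate global.
-/

/-- Partial derivative in the `i`-th space direction of `f(z, ħ)`. -/
noncomputable def pdZ {d : ℕ} (i : Fin d) (f : EuclideanSpace ℝ (Fin d) → ℝ → ℂ) :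
    EuclideanSpace ℝ (Fin d) → ℝ → ℂ :=
  fun z t => fderiv ℝ (fun w => f w t) z (EuclideanSpace.single i 1)

/-- Partial derivative in the `ħ` direction of `f(z, ħ)`. -/
noncomputable def pdH {d : ℕ} (f : EuclideanSpace ℝ (Fin d) → ℝ → ℂ) :
    EuclideanSpace ℝ (Fin d) → ℝ → ℂ :=
  fun z t => deriv (fun s => f z s) t

/-- Iterated mixed partial derivative along a list of directions: `Sum.inl i` means a
derivative in the `i`-th space variable, `Sum.inr ()` a derivative in `ħ`. -/
noncomputable def mixedDeriv {d : ℕ} :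
    List (Fin d ⊕ Unit) → (EuclideanSpace ℝ (Fin d) → ℝ → ℂ) →
      (EuclideanSpace ℝ (Fin d) → ℝ → ℂ)
  | [], f => f
  | Sum.inl i :: L, f => mixedDeriv L (pdZ i f)
  | Sum.inr _ :: L, f => mixedDeriv L (pdH f)

lemma hasFDerivAt_left {d : ℕ} {f : EuclideanSpace ℝ (Fin d) → ℝ → ℂ}
    (hf : ContDiff ℝ (⊤ : ℕ∞) (fun q : EuclideanSpace ℝ (Fin d) × ℝ => f q.1 q.2))
    (z : EuclideanSpace ℝ (Fin d)) (t : ℝ) :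
    HasFDerivAt (fun w => f w t)
      ((fderiv ℝ (fun q : EuclideanSpace ℝ (Fin d) × ℝ => f q.1 q.2) (z, t)).comp
        (ContinuousLinearMap.inl ℝ (EuclideanSpace ℝ (Fin d)) ℝ)) z :=
  HasFDerivAt.comp (g := fun q : EuclideanSpace ℝ (Fin d) × ℝ => f q.1 q.2)
    (f := fun w : EuclideanSpace ℝ (Fin d) => (w, t)) z
    ((hf.differentiable (by simp)) (z, t)).hasFDerivAt (hasFDerivAt_prodMk_left z t)

lemma hasDerivAt_right {d : ℕ} {f : EuclideanSpace ℝ (Fin d) → ℝ → ℂ}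
    (hf : ContDiff ℝ (⊤ : ℕ∞) (fun q : EuclideanSpace ℝ (Fin d) × ℝ => f q.1 q.2))
    (z : EuclideanSpace ℝ (Fin d)) (t : ℝ) :
    HasDerivAt (fun s => f z s)
      (fderiv ℝ (fun q : EuclideanSpace ℝ (Fin d) × ℝ => f q.1 q.2) (z, t) (0, 1)) t := by
  have h := (((hf.differentiable (by simp)) (z, t)).hasFDerivAt.comp t
    (hasFDerivAt_prodMk_right z t)).hasDerivAt
  simpa [Function.comp_def] using h

lemma contDiff_pdZ {d : ℕ} {f : EuclideanSpace ℝ (Fin d) → ℝ → ℂ}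
    (hf : ContDiff ℝ (⊤ : ℕ∞) (fun q : EuclideanSpace ℝ (Fin d) × ℝ => f q.1 q.2)) (i : Fin d) :
    ContDiff ℝ (⊤ : ℕ∞) (fun q : EuclideanSpace ℝ (Fin d) × ℝ => pdZ i f q.1 q.2) := by
  have h : (fun q : EuclideanSpace ℝ (Fin d) × ℝ => pdZ i f q.1 q.2) = fun q =>
      fderiv ℝ (fun q : EuclideanSpace ℝ (Fin d) × ℝ => f q.1 q.2) q
        (EuclideanSpace.single i 1, 0) := by
    funext q
    simp [pdZ, (hasFDerivAt_left hf q.1 q.2).fderiv]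
  rw [h]
  exact (hf.fderiv_right (m := (⊤ : ℕ∞)) (by simp)).clm_apply contDiff_const

lemma contDiff_pdH {d : ℕ} {f : EuclideanSpace ℝ (Fin d) → ℝ → ℂ}
    (hf : ContDiff ℝ (⊤ : ℕ∞) (fun q : EuclideanSpace ℝ (Fin d) × ℝ => f q.1 q.2)) :
    ContDiff ℝ (⊤ : ℕ∞) (fun q : EuclideanSpace ℝ (Fin d) × ℝ => pdH f q.1 q.2) := by
  have h : (fun q : EuclideanSpace ℝ (Fin d) × ℝ => pdH f q.1 q.2) = fun q =>
      fderiv ℝ (fun q : EuclideanSpace ℝ (Fin d) × ℝ => f q.1 q.2) q (0, 1) := by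
    funext q
    exact (hasDerivAt_right hf q.1 q.2).deriv
  rw [h]
  exact (hf.fderiv_right (m := (⊤ : ℕ∞)) (by simp)).clm_apply contDiff_const

lemma opNorm_le_sum_single {d : ℕ} (A : EuclideanSpace ℝ (Fin d) →L[ℝ] ℂ) :
    ‖A‖ ≤ ∑ i, ‖A (EuclideanSpace.single i 1)‖ := by
  refine A.opNorm_le_bound (Finset.sum_nonneg fun _ _ => norm_nonneg _) fun v => ?_
  have hv : A v = ∑ i, v i • A (EuclideanSpace.single i 1) := by
    conv_lhs => rw [← (EuclideanSpace.basisFun (Fin d) ℝ).sum_repr v]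
    simp
  rw [hv, Finset.sum_mul]
  refine (norm_sum_le _ _).trans (Finset.sum_le_sum fun i _ => ?_)
  rw [norm_smul, mul_comm]
  exact mul_le_mul_of_nonneg_left (PiLp.norm_apply_le v i) (norm_nonneg _)

/-- The power `ℓ - 2` is truncated: for `ℓ = 1` the estimate reads `t ≤ a + √t`, which is where
`t ≤ 1` enters. -/
lemma mul_pow_sub_two_le {ℓ : ℕ} (hℓ : ℓ ≠ 0) {a t : ℝ} (ha : 0 ≤ a) (ht : t ∈ Set.Icc (0 : ℝ) 1) :
    t * (a + Real.sqrt t) ^ (ℓ - 2) ≤ (a + Real.sqrt t) ^ ℓ := by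
  have hs := Real.sqrt_nonneg t
  have hsq := Real.sq_sqrt ht.1
  have hs1 : Real.sqrt t ≤ 1 := Real.sqrt_le_one.mpr ht.2
  match ℓ, hℓ with
  | 1, _ => simp; nlinarith
  | n + 2, _ =>
    have h : t ≤ (a + Real.sqrt t) ^ 2 := by nlinarith
    calc t * (a + Real.sqrt t) ^ (n + 2 - 2)
        ≤ (a + Real.sqrt t) ^ 2 * (a + Real.sqrt t) ^ n := by
          rw [Nat.add_sub_cancel]; gcongr
      _ = (a + Real.sqrt t) ^ (n + 2) := by ring

/-- The quasi-homogeneous Taylor estimate, with a constant uniform for `z` in a ball. -/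
lemma exists_weighted_bound {d : ℕ} (R : ℝ) (ℓ : ℕ) :
    ∀ f : EuclideanSpace ℝ (Fin d) → ℝ → ℂ,
      ContDiff ℝ (⊤ : ℕ∞) (fun q : EuclideanSpace ℝ (Fin d) × ℝ => f q.1 q.2) →
      (∀ L : List (Fin d ⊕ Unit),
        L.countP (fun x => x.isLeft) + 2 * L.countP (fun x => x.isRight) < ℓ →
        mixedDeriv L f 0 0 = 0) →
      ∃ C ≥ 0, ∀ z, ‖z‖ ≤ R → ∀ t ∈ Set.Icc (0 : ℝ) 1,
        ‖f z t‖ ≤ C * (‖z‖ + Real.sqrt t) ^ ℓ := by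
  induction ℓ using Nat.strong_induction_on with
  | _ ℓ ih =>
  intro f hf hflat
  rcases Nat.eq_zero_or_pos ℓ with rfl | hℓ
  · obtain ⟨C, hC⟩ := ((isCompact_closedBall (0 : EuclideanSpace ℝ (Fin d)) R).prod
      (isCompact_Icc (a := (0 : ℝ)) (b := 1))).exists_bound_of_continuousOn hf.continuous.continuousOn
    refine ⟨max C 0, le_max_right _ _, fun z hz t ht => ?_⟩
    simpa using Or.inl (hC (z, t) ⟨by simpa using hz, ht⟩)
  obtain ⟨A, hA0, hA⟩ := ih (ℓ - 2) (by omega) (pdH f) (contDiff_pdH hf) fun L hL =>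
    hflat (Sum.inr () :: L) (by simp [List.countP_cons] at hL ⊢; omega)
  have hB := fun i => ih (ℓ - 1) (by omega) (pdZ i f) (contDiff_pdZ hf i) fun L hL =>
    hflat (Sum.inl i :: L) (by simp [List.countP_cons] at hL ⊢; omega)
  choose B hB0 hB using hB
  have h00 : f 0 0 = 0 := hflat [] (by simpa using hℓ)
  refine ⟨A + ∑ i, B i, add_nonneg hA0 (Finset.sum_nonneg fun i _ => hB0 i), fun z hz t ht => ?_⟩
  have hs := Real.sqrt_nonneg t
  have h1 : ‖f z t - f z 0‖ ≤ A * (‖z‖ + Real.sqrt t) ^ ℓ := by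
    have h := (convex_Icc (0 : ℝ) t).norm_image_sub_le_of_norm_deriv_le
      (f := fun s => f z s) (C := A * (‖z‖ + Real.sqrt t) ^ (ℓ - 2))
      (fun s _ => (hasDerivAt_right hf z s).differentiableAt)
      (fun s hs => (hA z hz s ⟨hs.1, hs.2.trans ht.2⟩).trans (by
        have := Real.sqrt_le_sqrt hs.2
        gcongr))
      (Set.left_mem_Icc.mpr ht.1) (Set.right_mem_Icc.mpr ht.1)
    calc ‖f z t - f z 0‖ ≤ A * (t * (‖z‖ + Real.sqrt t) ^ (ℓ - 2)) := by
          rw [sub_zero, Real.norm_of_nonneg ht.1] at h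
          linarith
      _ ≤ _ := mul_le_mul_of_nonneg_left
          (mul_pow_sub_two_le hℓ.ne' (norm_nonneg z) ht) hA0
  have h2 : ‖f z 0 - f 0 0‖ ≤ (∑ i, B i) * (‖z‖ + Real.sqrt t) ^ ℓ := by
    -- The ball of radius `‖z‖`, rather than `R`, makes the gradient bound scale with `z`.
    have h := (convex_closedBall (0 : EuclideanSpace ℝ (Fin d)) ‖z‖).norm_image_sub_le_of_norm_fderiv_le
      (𝕜 := ℝ) (f := fun w => f w 0) (C := (∑ i, B i) * ‖z‖ ^ (ℓ - 1)) (x := 0) (y := z)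
      (fun w _ => (hasFDerivAt_left hf w 0).differentiableAt)
      (fun w hw => by
        have hw' : ‖w‖ ≤ ‖z‖ := by simpa using hw
        refine (opNorm_le_sum_single _).trans ?_
        rw [Finset.sum_mul]
        refine Finset.sum_le_sum fun i _ => ?_
        have := hB i w (hw'.trans hz) 0 ⟨le_rfl, zero_le_one⟩
        rw [Real.sqrt_zero, add_zero] at this
        refine this.trans (mul_le_mul_of_nonneg_left ?_ (hB0 i))
        gcongr)
      (by simp) (by simp)
    calc ‖f z 0 - f 0 0‖ ≤ (∑ i, B i) * ‖z‖ ^ ℓ := by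
          rw [sub_zero, mul_assoc, ← pow_succ, Nat.sub_add_cancel hℓ] at h
          exact h
      _ ≤ _ := by
          refine mul_le_mul_of_nonneg_left ?_ (Finset.sum_nonneg fun i _ => hB0 i)
          gcongr
          linarith
  calc ‖f z t‖ = ‖(f z t - f z 0) + (f z 0 - f 0 0)‖ := by rw [h00]; simp
    _ ≤ ‖f z t - f z 0‖ + ‖f z 0 - f 0 0‖ := norm_add_le _ _
    _ ≤ _ := by linarith

/-- Lemma 4.2 (analytic core): a smooth compactly supported function `k(z, ħ)` whose
Taylor series at `(0,0)` contains only monomials `z^α ħ^j` of weight `|α| + 2j ≥ ℓ`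
satisfies `|k(z,ħ)| ≤ C (|z| + √ħ)^ℓ` for `ħ ∈ [0,1]`. -/
theorem stmt4 (d ℓ : ℕ) (hd : 1 ≤ d)
    (k : EuclideanSpace ℝ (Fin d) → ℝ → ℂ)
    (hsmooth : ContDiff ℝ (⊤ : ℕ∞) (fun q : EuclideanSpace ℝ (Fin d) × ℝ => k q.1 q.2))
    (K : Set (EuclideanSpace ℝ (Fin d))) (hK : IsCompact K)
    (hsupp : ∀ z, ∀ t ∈ Set.Icc (0 : ℝ) 1, z ∉ K → k z t = 0)
    (hflat : ∀ L : List (Fin d ⊕ Unit),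
      L.countP (fun x => x.isLeft) + 2 * L.countP (fun x => x.isRight) < ℓ →
      mixedDeriv L k 0 0 = 0) :
    ∃ C > 0, ∀ z, ∀ t ∈ Set.Icc (0 : ℝ) 1,
      ‖k z t‖ ≤ C * (‖z‖ + Real.sqrt t) ^ ℓ := by
  obtain ⟨R, hR⟩ := hK.isBounded.exists_norm_le
  obtain ⟨C, hC0, hC⟩ := exists_weighted_bound R ℓ k hsmooth hflat
  refine ⟨C + 1, by linarith, fun z t ht => ?_⟩
  have hp : 0 ≤ (‖z‖ + Real.sqrt t) ^ ℓ := by positivity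
  by_cases hz : z ∈ K
  · linarith [hC z (hR z hz) t ht]
  · rw [hsupp z t ht hz, norm_zero]
    positivity
end

section
/- Let n ≥ 1 and let p₁,…,p_n be positive integers with gcd(p₁,…,p_n) = 1. Then there exists C > 0 such that for every integer N ≥ 1, | #{γ ∈ ℕⁿ : p₁γ₁ + ⋯ + p_nγ_n = N} − N^{n−1} / ((n−1)! · p₁⋯p_n) | ≤ C (1+N)^{n−2}. -/
/-!
The proof is by induction on the number of weights, for weights whose gcd `d` is arbitrary: with
`m + 1` weights, the number of solutions is `0` when `d ∤ N`, and otherwise it is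
`d * N ^ m / (m! * ∏ p i) + O(N ^ (m - 1))`, exactly so when `m = 0`.

Splitting off the weight `q = p 0` and grouping the solutions by the value `M` of the remaining sum
gives `R(N) = ∑ R'(M)`, where `M ≤ N` satisfies `q ∣ N - M`, and `R'(M) = 0` unless `d' ∣ M`, with
`d'` the gcd of the remaining weights. If `gcd q d' ∣ N`, the Chinese remainder theorem turns the
two divisibility conditions into a single congruence modulo `L = lcm d' q` (`ncard_sol_succ_eq`).
The sum of `M ^ m` over a residue class modulo `L` is `N ^ (m + 1) / ((m + 1) * L) + O(N ^ m)`
(`sum_pow_modEq`), and `d' / L = gcd q d' / q` produces the leading coefficient.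
-/

/-- The set of `γ ∈ ℕⁿ` with `∑ p i * γ i = N`. -/
def sol {n : ℕ} (p : Fin n → ℕ) (N : ℕ) : Set (Fin n → ℕ) := {γ | ∑ i, p i * γ i = N}

lemma sol_finite {n : ℕ} (p : Fin n → ℕ) (hp : ∀ i, 0 < p i) (N : ℕ) : (sol p N).Finite := by
  refine (Set.finite_Iic (fun _ : Fin n => N)).subset ?_
  intro γ hγ i
  have h : ∑ i, p i * γ i = N := hγ
  have h1 : p i * γ i ≤ ∑ i, p i * γ i :=
    Finset.single_le_sum (f := fun i => p i * γ i) (fun _ _ => Nat.zero_le _) (Finset.mem_univ i)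
  have h2 := Nat.le_mul_of_pos_left (γ i) (hp i)
  show γ i ≤ N
  omega

lemma sol_eq_empty {n : ℕ} (p : Fin n → ℕ) (N : ℕ) (h : ¬ Finset.univ.gcd p ∣ N) :
    sol p N = ∅ := by
  rw [Set.eq_empty_iff_forall_notMem]
  intro γ hγ
  have h1 : ∑ i, p i * γ i = N := hγ
  apply h
  rw [← h1]
  exact Finset.dvd_sum fun i hi => Dvd.dvd.mul_right (Finset.gcd_dvd hi) _

/-- Grouping the solutions by the value `M` of the sum over all weights but the first. -/
lemma ncard_sol_succ {n : ℕ} (p : Fin (n + 1) → ℕ) (hp : ∀ i, 0 < p i) (N : ℕ) :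
    (sol p N).ncard =
      ∑ M ∈ Finset.range (N + 1), if p 0 ∣ N - M then (sol (Fin.tail p) M).ncard else 0 := by
  classical
  rw [Set.ncard_eq_toFinset_card _ (sol_finite p hp N)]
  rw [Finset.card_eq_sum_card_fiberwise (f := fun γ => ∑ i, Fin.tail p i * γ i.succ)
    (t := Finset.range (N + 1))]
  · refine Finset.sum_congr rfl fun M hM => ?_
    have hMN : M ≤ N := by simpa [Nat.lt_succ_iff] using hM
    split_ifs with hq
    · obtain ⟨k, hk⟩ := hq
      rw [Set.ncard_eq_toFinset_card _ (sol_finite (Fin.tail p) (fun i => hp _) M)]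
      refine Finset.card_bij' (fun γ _ => Fin.tail γ) (fun γ _ => Fin.cons k γ) ?_ ?_ ?_ ?_
      · intro γ hγ
        simp only [Finset.mem_filter, Set.Finite.mem_toFinset] at hγ
        simpa [sol, Fin.tail] using hγ.2
      · intro γ hγ
        have h : ∑ i, Fin.tail p i * γ i = M := by simpa [sol] using hγ
        have h' : ∑ i : Fin n, p i.succ * γ i = M := h
        simp only [Finset.mem_filter, Set.Finite.mem_toFinset, sol, Set.mem_ofPred_eq,
          Fin.sum_univ_succ, Fin.cons_zero, Fin.cons_succ]
        exact ⟨by omega, h⟩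
      · intro γ hγ
        simp only [Finset.mem_filter, Set.Finite.mem_toFinset, sol, Set.mem_ofPred_eq,
          Fin.sum_univ_succ] at hγ
        obtain ⟨h1, h2⟩ := hγ
        have h2' : ∑ i : Fin n, p i.succ * γ i.succ = M := h2
        have : k = γ 0 := by
          apply Nat.eq_of_mul_eq_mul_left (hp 0)
          omega
        rw [this]
        exact Fin.cons_self_tail γ
      · intro γ hγ
        exact Fin.tail_cons _ _
    · rw [Finset.card_eq_zero, Finset.filter_eq_empty_iff]
      intro γ hγ h2
      simp only [Set.Finite.mem_toFinset, sol, Set.mem_ofPred_eq, Fin.sum_univ_succ] at hγ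
      have h2' : ∑ i : Fin n, p i.succ * γ i.succ = M := h2
      exact hq ⟨γ 0, by omega⟩
  · intro γ hγ
    simp only [Set.Finite.coe_toFinset, sol, Set.mem_ofPred_eq, Fin.sum_univ_succ] at hγ
    simp only [Finset.coe_range, Set.mem_Iio, Fin.tail]
    omega

lemma gcd_univ_succ {n : ℕ} (p : Fin (n + 1) → ℕ) :
    Finset.univ.gcd p = Nat.gcd (p 0) (Finset.univ.gcd (Fin.tail p)) := by
  apply Nat.dvd_antisymm
  · refine Nat.dvd_gcd (Finset.gcd_dvd (Finset.mem_univ _)) (Finset.dvd_gcd fun i _ => ?_)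
    exact Finset.gcd_dvd (f := p) (Finset.mem_univ i.succ)
  · refine Finset.dvd_gcd fun i _ => ?_
    refine Fin.cases (Nat.gcd_dvd_left _ _) (fun j => ?_) i
    exact (Nat.gcd_dvd_right _ _).trans (Finset.gcd_dvd (f := Fin.tail p) (Finset.mem_univ j))

/-- By the Chinese remainder theorem, the values `M` that contribute form one residue class. -/
lemma ncard_sol_succ_eq {n : ℕ} (p : Fin (n + 1) → ℕ) (hp : ∀ i, 0 < p i) (N : ℕ)
    (hN : Finset.univ.gcd p ∣ N) :
    ∃ c, c ≡ 0 [MOD Finset.univ.gcd (Fin.tail p)] ∧ (sol p N).ncard =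
      ∑ M ∈ Finset.range (N + 1) with
        M ≡ c [MOD Nat.lcm (Finset.univ.gcd (Fin.tail p)) (p 0)], (sol (Fin.tail p) M).ncard := by
  set d := Finset.univ.gcd (Fin.tail p) with hd
  have hc : 0 ≡ N [MOD Nat.gcd d (p 0)] := by
    rw [gcd_univ_succ, Nat.gcd_comm] at hN
    exact (Nat.modEq_zero_iff_dvd.mpr hN).symm
  obtain ⟨c, hc0, hcN⟩ := Nat.chineseRemainder' hc
  refine ⟨c, hc0, ?_⟩
  rw [ncard_sol_succ p hp, Finset.sum_filter]
  refine Finset.sum_congr rfl fun M hM => ?_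
  have hMN : M ≤ N := by simpa [Nat.lt_succ_iff] using hM
  have e : M ≡ c [MOD Nat.lcm d (p 0)] ↔ d ∣ M ∧ p 0 ∣ N - M := by
    have e₀ : M ≡ c [MOD Nat.lcm d (p 0)] ↔ M ≡ c [MOD d] ∧ M ≡ c [MOD p 0] := by
      simp only [Nat.modEq_iff_dvd, Int.natCast_dvd, Nat.lcm_dvd_iff]
    rw [e₀, ← Nat.modEq_iff_dvd' hMN, ← Nat.modEq_zero_iff_dvd]
    exact and_congr ⟨fun h => h.trans hc0, fun h => h.trans hc0.symm⟩
      ⟨fun h => h.trans hcN, fun h => h.trans hcN.symm⟩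
  by_cases h1 : d ∣ M
  · simp [e, h1]
  · simp [e, h1, sol_eq_empty _ _ h1]

/-- Discrete comparison of `x ^ m` with its integral over an interval of length `L`. -/
lemma pow_succ_sub_bounds (m : ℕ) (x L : ℝ) (hx : 0 ≤ x) (hL : 0 ≤ L) :
    (m + 1) * L * x ^ m ≤ (x + L) ^ (m + 1) - x ^ (m + 1) ∧
      (x + L) ^ (m + 1) - x ^ (m + 1) ≤ (m + 1) * L * (x + L) ^ m := by
  induction m with
  | zero => simp
  | succ m ih =>
    obtain ⟨h1, h2⟩ := ih
    have h3 : x ^ (m + 1) ≤ (x + L) ^ (m + 1) := by gcongr; linarith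
    have h4 := mul_le_mul_of_nonneg_left h1 hx
    have h5 := mul_le_mul_of_nonneg_left h2 (add_nonneg hx hL)
    have h6 := mul_le_mul_of_nonneg_left h3 hL
    push_cast
    constructor
    · have : (x + L) ^ (m + 1 + 1) - x ^ (m + 1 + 1) =
        x * ((x + L) ^ (m + 1) - x ^ (m + 1)) + L * (x + L) ^ (m + 1) := by ring
      rw [this]
      have : ((m : ℝ) + 1 + 1) * L * x ^ (m + 1) =
        x * ((m + 1) * L * x ^ m) + L * x ^ (m + 1) := by ring
      rw [this]
      linarith
    · have : (x + L) ^ (m + 1 + 1) - x ^ (m + 1 + 1) =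
        (x + L) * ((x + L) ^ (m + 1) - x ^ (m + 1)) + L * x ^ (m + 1) := by ring
      rw [this]
      have : ((m : ℝ) + 1 + 1) * L * (x + L) ^ (m + 1) =
        (x + L) * ((m + 1) * L * (x + L) ^ m) + L * (x + L) ^ (m + 1) := by ring
      rw [this]
      linarith

/-- Telescoped form of the comparison: `e` is the first element of the residue class of `c` that is
at least `N`. -/
lemma sum_pow_modEq_aux (m L c : ℕ) (hL : 0 < L) (N : ℕ) :
    ∃ e : ℕ, N ≤ e ∧ e < N + L ∧ e ≡ c [MOD L] ∧
      (m + 1) * (L : ℝ) * ∑ M ∈ Finset.range N with M ≡ c [MOD L], (M : ℝ) ^ m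
        ≤ (e : ℝ) ^ (m + 1) ∧
      (e : ℝ) ^ (m + 1) ≤
        (m + 1) * (L : ℝ) * ∑ M ∈ Finset.range N with M ≡ c [MOD L], (M : ℝ) ^ m
          + (m + 1) * (L : ℝ) * (e : ℝ) ^ m + (L : ℝ) ^ (m + 1) := by
  induction N with
  | zero =>
    have h := Nat.mod_lt c hL
    refine ⟨c % L, by omega, by omega, Nat.mod_modEq c L, by simp, ?_⟩
    have h1 : ((c % L : ℕ) : ℝ) ^ (m + 1) ≤ (L : ℝ) ^ (m + 1) := by gcongr
    have h2 : 0 ≤ (m + 1) * (L : ℝ) * ((c % L : ℕ) : ℝ) ^ m := by positivity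
    simp only [Finset.range_zero, Finset.filter_empty, Finset.sum_empty, mul_zero, zero_add]
    linarith
  | succ N ih =>
    obtain ⟨e, h1, h2, h3, h4, h5⟩ := ih
    rw [Finset.range_add_one, Finset.filter_insert]
    by_cases hN : N ≡ c [MOD L]
    · have hNe : N = e := by
        have h6 : L ∣ e - N := (Nat.modEq_iff_dvd' h1).mp (hN.trans h3.symm)
        have h7 := Nat.eq_zero_of_dvd_of_lt h6 (by omega)
        omega
      obtain ⟨b1, b2⟩ := pow_succ_sub_bounds m e L (by positivity) (by positivity)
      refine ⟨e + L, by omega, by omega, ?_, ?_⟩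
      · simpa [Nat.ModEq] using h3
      · rw [if_pos hN, Finset.sum_insert (by simp), mul_add]
        subst hNe
        push_cast
        constructor <;> linarith
    · rw [if_neg hN]
      have : N ≠ e := by rintro rfl; exact hN h3
      exact ⟨e, by omega, by omega, h3, h4, h5⟩

lemma sum_pow_modEq (m L : ℕ) (hL : 0 < L) :
    ∃ C : ℝ, 0 ≤ C ∧ ∀ c N : ℕ,
      |∑ M ∈ Finset.range (N + 1) with M ≡ c [MOD L], (M : ℝ) ^ m
        - (N : ℝ) ^ (m + 1) / ((m + 1) * L)| ≤ C * (1 + (N : ℝ)) ^ m := by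
  refine ⟨(1 + L : ℝ) ^ m + (1 + L : ℝ) ^ m + (L : ℝ) ^ (m + 1), by positivity, fun c N => ?_⟩
  obtain ⟨e, h1, h2, -, h4, h5⟩ := sum_pow_modEq_aux m L c hL (N + 1)
  set S := ∑ M ∈ Finset.range (N + 1) with M ≡ c [MOD L], (M : ℝ) ^ m
  have hLr : (1 : ℝ) ≤ L := by exact_mod_cast hL
  have hN0 : (0 : ℝ) ≤ N := by positivity
  have hm0 : (0 : ℝ) ≤ m := by positivity
  have heN : (N : ℝ) ≤ e := by exact_mod_cast (by omega : N ≤ e)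
  have heL : (e : ℝ) ≤ N + L := by exact_mod_cast (by omega : e ≤ N + L)
  have hK : (1 : ℝ) ≤ (m + 1) * L := by nlinarith
  set K : ℝ := (m + 1) * L with hKd
  have hK0 : 0 < K := by linarith
  have b := (pow_succ_sub_bounds m N L hN0 (by linarith)).2
  have hb : ((N : ℝ) + L) ^ m ≤ (1 + L : ℝ) ^ m * (1 + (N : ℝ)) ^ m := by
    rw [← mul_pow]; gcongr; nlinarith
  have he1 : (e : ℝ) ^ (m + 1) ≤ ((N : ℝ) + L) ^ (m + 1) := by gcongr
  have he2 : (e : ℝ) ^ m ≤ ((N : ℝ) + L) ^ m := by gcongr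
  have he3 : (N : ℝ) ^ (m + 1) ≤ (e : ℝ) ^ (m + 1) := by gcongr
  have hone : (1 : ℝ) ≤ (1 + (N : ℝ)) ^ m := one_le_pow₀ (by linarith)
  have hLp : (0 : ℝ) ≤ (L : ℝ) ^ (m + 1) := by positivity
  have hLN : (L : ℝ) ^ (m + 1) ≤ K * ((L : ℝ) ^ (m + 1) * (1 + (N : ℝ)) ^ m) :=
    (le_mul_of_one_le_right hLp hone).trans (le_mul_of_one_le_left (by positivity) hK)
  have hb' := mul_le_mul_of_nonneg_left hb hK0.le
  have he2' := mul_le_mul_of_nonneg_left he2 hK0.le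
  have hX : 0 ≤ K * ((1 + L : ℝ) ^ m * (1 + (N : ℝ)) ^ m) := by positivity
  have key : S - (N : ℝ) ^ (m + 1) / K = (K * S - (N : ℝ) ^ (m + 1)) / K := by
    field_simp
  rw [key, abs_div, abs_of_pos hK0, div_le_iff₀ hK0, abs_le]
  have ex : ((1 + L : ℝ) ^ m + (1 + L : ℝ) ^ m + (L : ℝ) ^ (m + 1)) * (1 + (N : ℝ)) ^ m * K
    = K * ((1 + L : ℝ) ^ m * (1 + (N : ℝ)) ^ m) + K * ((1 + L : ℝ) ^ m * (1 + (N : ℝ)) ^ m)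
      + K * ((L : ℝ) ^ (m + 1) * (1 + (N : ℝ)) ^ m) := by ring
  rw [ex]
  constructor <;> linarith

/-- The asymptotics for weights of arbitrary gcd. The factor `m` in the error term makes it vanish
for a single weight; an error of order `(1 + N)⁻¹` there would sum to a logarithm in the next
step. -/
lemma sol_asymptotic (m : ℕ) (p : Fin (m + 1) → ℕ) (hp : ∀ i, 0 < p i) :
    ∃ C : ℝ, 0 ≤ C ∧ ∀ N : ℕ, Finset.univ.gcd p ∣ N →
      |((sol p N).ncard : ℝ) -
        (Finset.univ.gcd p : ℕ) * (N : ℝ) ^ m / (m.factorial * ∏ i, (p i : ℝ))|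
        ≤ C * (m * (1 + (N : ℝ)) ^ (m - 1)) := by
  induction m with
  | zero =>
    refine ⟨0, le_rfl, fun N hN => ?_⟩
    have hp0 := hp 0
    have hg : Finset.univ.gcd p = p 0 := by simp
    rw [hg] at hN ⊢
    obtain ⟨k, rfl⟩ := hN
    have hs : sol p (p 0 * k) = {fun _ => k} := by
      ext γ
      simp only [sol, Set.mem_ofPred_eq, Set.mem_singleton_iff]
      constructor
      · intro h
        funext i
        rw [Fin.fin_one_eq_zero i]
        exact Nat.eq_of_mul_eq_mul_left hp0 h
      · rintro rfl
        rfl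
    have : (p 0 : ℝ) ≠ 0 := by positivity
    rw [hs]
    simp [this]
  | succ m ih =>
    obtain ⟨C₁, hC₁, h₁⟩ := ih (Fin.tail p) (fun i => hp _)
    set d := Finset.univ.gcd (Fin.tail p) with hd
    have hdpos : 0 < d := by
      refine Nat.pos_of_dvd_of_pos (Finset.gcd_dvd (f := Fin.tail p) (Finset.mem_univ 0)) (hp _)
    have hL : 0 < Nat.lcm d (p 0) := Nat.lcm_pos hdpos (hp 0)
    obtain ⟨C₂, hC₂, h₂⟩ := sum_pow_modEq m _ hL
    set A : ℝ := d / (m.factorial * ∏ i, (Fin.tail p i : ℝ)) with hA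
    have hPpos : (0 : ℝ) < ∏ i, (Fin.tail p i : ℝ) :=
      Finset.prod_pos fun i _ => by exact_mod_cast hp _
    have hA0 : 0 ≤ A := by positivity
    refine ⟨C₁ * m + A * C₂, by positivity, fun N hN => ?_⟩
    obtain ⟨c, hc, hR⟩ := ncard_sol_succ_eq p hp N hN
    rw [← hd] at hc hR
    set F := {M ∈ Finset.range (N + 1) | M ≡ c [MOD Nat.lcm d (p 0)]} with hF
    have hlead : (Finset.univ.gcd p : ℕ) * (N : ℝ) ^ (m + 1) /
        ((m + 1).factorial * ∏ i, (p i : ℝ))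
        = A * ((N : ℝ) ^ (m + 1) / ((m + 1) * (Nat.lcm d (p 0) : ℕ))) := by
      have hgL : ((Finset.univ.gcd p : ℕ) : ℝ) * (Nat.lcm d (p 0) : ℕ) = d * p 0 := by
        rw [gcd_univ_succ, ← hd, Nat.gcd_comm]
        exact_mod_cast Nat.gcd_mul_lcm d (p 0)
      have hLr : ((Nat.lcm d (p 0) : ℕ) : ℝ) ≠ 0 := by positivity
      have hp0 : (p 0 : ℝ) ≠ 0 := by exact_mod_cast (hp 0).ne'
      have hf : (m.factorial : ℝ) ≠ 0 := by positivity
      have hm1 : (m : ℝ) + 1 ≠ 0 := by positivity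
      have hP := hPpos.ne'
      have hprod : ∏ i, (p i : ℝ) = p 0 * ∏ i, (Fin.tail p i : ℝ) := Fin.prod_univ_succ _
      rw [hprod, hA, Nat.factorial_succ, div_mul_div_comm, div_eq_div_iff (by positivity)
        (by positivity)]
      push_cast
      linear_combination (N : ℝ) ^ (m + 1) * (m.factorial : ℝ) * (∏ i, (Fin.tail p i : ℝ)) *
        (m + 1) * hgL
    have e₁ : |∑ M ∈ F, ((sol (Fin.tail p) M).ncard : ℝ) - A * ∑ M ∈ F, (M : ℝ) ^ m|
        ≤ C₁ * m * (1 + (N : ℝ)) ^ m := by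
      rw [Finset.mul_sum, ← Finset.sum_sub_distrib]
      refine (Finset.abs_sum_le_sum_abs _ _).trans ?_
      have hterm : ∀ M ∈ F, |((sol (Fin.tail p) M).ncard : ℝ) - A * (M : ℝ) ^ m|
          ≤ C₁ * (m * (1 + (N : ℝ)) ^ (m - 1)) := by
        intro M hM
        simp only [hF, Finset.mem_filter, Finset.mem_range] at hM
        have hdM : d ∣ M := by
          rw [← Nat.modEq_zero_iff_dvd]
          exact (hM.2.of_dvd (Nat.dvd_lcm_left _ _)).trans hc
        have h := h₁ M hdM
        have hMN : (M : ℝ) ≤ N := by exact_mod_cast (by omega : M ≤ N)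
        have hr : A * (M : ℝ) ^ m = d * (M : ℝ) ^ m / (m.factorial * ∏ i, (Fin.tail p i : ℝ)) := by
          rw [hA]; ring
        rw [hr]
        refine h.trans ?_
        gcongr
      refine (Finset.sum_le_card_nsmul _ _ _ hterm).trans ?_
      have hcard : (F.card : ℝ) ≤ 1 + N := by
        have := Finset.card_filter_le (Finset.range (N + 1))
          (fun M => M ≡ c [MOD Nat.lcm d (p 0)])
        rw [Finset.card_range] at this
        rw [add_comm]
        exact_mod_cast this
      rw [nsmul_eq_mul]
      calc (F.card : ℝ) * (C₁ * (m * (1 + (N : ℝ)) ^ (m - 1)))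
          ≤ (1 + N) * (C₁ * (m * (1 + (N : ℝ)) ^ (m - 1))) := by gcongr
        _ = C₁ * m * (1 + (N : ℝ)) ^ m := by
          rcases m with _ | m
          · simp
          · rw [Nat.add_sub_cancel]; ring
    have e₂ := mul_le_mul_of_nonneg_left (h₂ c N) hA0
    rw [← abs_of_nonneg hA0, ← abs_mul, abs_of_nonneg hA0, mul_sub] at e₂
    rw [hlead, hR]
    push_cast
    refine (abs_sub_le _ (A * ∑ M ∈ F, (M : ℝ) ^ m) _).trans ((add_le_add e₁ e₂).trans ?_)
    have hm : (1 : ℝ) ≤ m + 1 := by linarith [(Nat.cast_nonneg m : (0 : ℝ) ≤ m)]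
    have h0 : 0 ≤ (C₁ * m + A * C₂) * (1 + (N : ℝ)) ^ m := by positivity
    nlinarith [mul_le_mul_of_nonneg_left hm h0]

/-- Leading asymptotics of the number of integral points of the simplex
`{x ∈ ℝ₊ⁿ : ⟨p,x⟩ = N}` for coprime positive integers `p₁,…,p_n`:
`#{γ ∈ ℕⁿ : ⟨p,γ⟩ = N} = N^{n-1}/((n-1)!·p₁⋯p_n) + O(N^{n-2})`. -/
theorem stmt6 (n : ℕ) (hn : 1 ≤ n) (p : Fin n → ℕ) (hp : ∀ i, 0 < p i)
    (hgcd : Finset.univ.gcd p = 1) :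
    ∃ C > 0, ∀ N : ℕ, 1 ≤ N →
      |(Set.ncard {γ : Fin n → ℕ | ∑ i, p i * γ i = N} : ℝ) -
          (N : ℝ) ^ (n - 1) / ((n - 1).factorial * ∏ i, (p i : ℝ))|
        ≤ C * (1 + (N : ℝ)) ^ ((n : ℤ) - 2) := by
  obtain ⟨m, rfl⟩ : ∃ m, n = m + 1 := ⟨n - 1, by omega⟩
  obtain ⟨C, hC, h⟩ := sol_asymptotic m p hp
  refine ⟨C * m + 1, by positivity, fun N _ => ?_⟩
  have hN := h N (by rw [hgcd]; exact one_dvd _)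
  rw [hgcd, Nat.cast_one, one_mul] at hN
  rw [Nat.add_sub_cancel]
  refine (show _ ≤ _ from hN).trans ?_
  rcases m with _ | k
  · simp only [Nat.cast_zero, zero_mul, mul_zero]
    positivity
  · have hexp : ((k + 1 + 1 : ℕ) : ℤ) - 2 = (k : ℤ) := by push_cast; ring
    rw [hexp, zpow_natCast, Nat.add_sub_cancel]
    have : 0 ≤ (1 + (N : ℝ)) ^ k := by positivity
    nlinarith
end

section
/- Let d ≥ 1 and N ≥ 1 be integers. Let p : ℝ^d → ℝ be a smooth function with p(0) = 0, dp(0) = 0, and positive definite Hessian at 0. Let r : ℝ^d → ℝ be a smooth function that is flat at 0, i.e. ∂^α r(0) = 0 for every multi-index α. Then there exist an open neighbourhood U of 0 and a smooth function s : U → ℝ such that r = s · p^N on U. -/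
/-!
Near `0` the Hessian bound gives `p x ≥ c ‖x‖ ^ 2` with `c > 0` (`exists_quadratic_lower_bound`),
so `s = (p ^ N)⁻¹ • r` makes sense off `0`, and the junk value `0⁻¹ = 0` gives `s 0 = 0`, which is
the right value since `r` is flat. It remains to see that `s` is smooth. Off `0`, for any `g`,
`D ((p ^ n)⁻¹ • g) = (p ^ (n + 1))⁻¹ • (p • Dg - n • Dp ⊗ g)`,
and the new numerator is flat when `g` is, although it takes values in another space. At `0`
both sides vanish, because a flat function is `O(‖x‖ ^ m)` for every `m`
(`FlatAtZero.exists_bound`). Hence the class of all quotients `(p ^ n)⁻¹ • g` with `g` flat,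
`n` arbitrary, and arbitrary target space, is stable under differentiation, and induction on the
order of differentiability (`contDiffOn_quotient`) shows that all its members are smooth.
-/

/-- A smooth function all of whose derivatives (including the zeroth) vanish at the origin. -/
structure FlatAtZero {E F : Type} [NormedAddCommGroup E] [NormedSpace ℝ E]
    [NormedAddCommGroup F] [NormedSpace ℝ F] (g : E → F) : Prop where
  contDiff : ContDiff ℝ (⊤ : ℕ∞) g
  flat : ∀ m : ℕ, iteratedFDeriv ℝ m g 0 = 0

section

variable {E F G H : Type} [NormedAddCommGroup E] [NormedSpace ℝ E]
  [NormedAddCommGroup F] [NormedSpace ℝ F] [NormedAddCommGroup G] [NormedSpace ℝ G]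
  [NormedAddCommGroup H] [NormedSpace ℝ H]

theorem FlatAtZero.apply_zero {g : E → F} (hg : FlatAtZero g) : g 0 = 0 := by
  rw [← norm_eq_zero, ← norm_iteratedFDeriv_zero (𝕜 := ℝ), hg.flat 0, norm_zero]

theorem FlatAtZero.fderiv {g : E → F} (hg : FlatAtZero g) : FlatAtZero (fderiv ℝ g) where
  contDiff := hg.contDiff.fderiv_right (by simp)
  flat m := by
    rw [← norm_eq_zero, norm_iteratedFDeriv_fderiv, hg.flat, norm_zero]

/-- By Leibniz' rule, a bilinear product with one flat factor is flat. -/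
theorem FlatAtZero.bilinear {f : E → F} {g : E → G} (B : F →L[ℝ] G →L[ℝ] H)
    (hf : ContDiff ℝ (⊤ : ℕ∞) f) (hg : FlatAtZero g) :
    FlatAtZero (fun x => B (f x) (g x)) where
  contDiff := (B.contDiff.comp hf).clm_apply hg.contDiff
  flat m := by
    have h := B.norm_iteratedFDeriv_le_of_bilinear hf hg.contDiff 0 (n := m)
      (by exact_mod_cast le_top)
    simpa [hg.flat] using h

theorem FlatAtZero.sub {f g : E → F} (hf : FlatAtZero f) (hg : FlatAtZero g) :
    FlatAtZero (fun x => f x - g x) where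
  contDiff := hf.contDiff.sub hg.contDiff
  flat m := by
    have h := iteratedFDeriv_sub_apply (𝕜 := ℝ) (x := 0) (i := m)
      (hf.contDiff.contDiffAt.of_le (by exact_mod_cast le_top))
      (hg.contDiff.contDiffAt.of_le (by exact_mod_cast le_top))
    rw [hf.flat, hg.flat, sub_zero] at h
    exact h

/-- Radial mean value inequality: integrating a bound on the derivative gains one order of
vanishing at the origin. -/
theorem norm_le_pow_succ_of_fderiv {f : E → F} {C δ : ℝ} {m : ℕ} (hC : 0 ≤ C)
    (hf : Differentiable ℝ f) (h0 : f 0 = 0)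
    (hb : ∀ y, ‖y‖ < δ → ‖fderiv ℝ f y‖ ≤ C * ‖y‖ ^ m) {x : E} (hx : ‖x‖ < δ) :
    ‖f x‖ ≤ C * ‖x‖ ^ (m + 1) := by
  have h := (convex_closedBall (0 : E) ‖x‖).norm_image_sub_le_of_norm_fderiv_le (𝕜 := ℝ)
    (f := f) (C := C * ‖x‖ ^ m) (x := 0) (y := x) (fun y _ => hf y)
    (fun y hy => by
      have hy' : ‖y‖ ≤ ‖x‖ := by simpa using hy
      exact (hb y (hy'.trans_lt hx)).trans (by gcongr))
    (by simp) (by simp)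
  rw [h0, sub_zero, sub_zero] at h
  calc ‖f x‖ ≤ C * ‖x‖ ^ m * ‖x‖ := h
    _ = C * ‖x‖ ^ (m + 1) := by ring

/-- A flat function vanishes to every order `m` at the origin. -/
theorem FlatAtZero.exists_bound (m : ℕ) : ∀ {F : Type} [NormedAddCommGroup F] [NormedSpace ℝ F]
    {g : E → F}, FlatAtZero g →
    ∃ C, 0 ≤ C ∧ ∃ δ, 0 < δ ∧ ∀ x, ‖x‖ < δ → ‖g x‖ ≤ C * ‖x‖ ^ m := by
  induction m with
  | zero =>
    intro F _ _ g hg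
    have hc := hg.contDiff.continuous.continuousAt (x := 0)
    obtain ⟨δ, hδ, h⟩ := Metric.continuousAt_iff.1 hc 1 one_pos
    refine ⟨1, zero_le_one, δ, hδ, fun x hx => ?_⟩
    have := h (x := x) (by simpa using hx)
    rw [hg.apply_zero, dist_zero_right] at this
    simpa using this.le
  | succ m ih =>
    intro F _ _ g hg
    obtain ⟨C, hC, δ, hδ, h⟩ := ih hg.fderiv
    exact ⟨C, hC, δ, hδ, fun x hx => norm_le_pow_succ_of_fderiv hC
      (hg.contDiff.differentiable (by simp)) hg.apply_zero h hx⟩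

/-- Quadratic growth at a non-degenerate minimum: `p` differs from half its Hessian form by
`o(‖x‖ ^ 2)`, and that form is coercive by compactness of the unit sphere. -/
theorem exists_quadratic_lower_bound [FiniteDimensional ℝ E] {p : E → ℝ}
    (hp : ContDiff ℝ (⊤ : ℕ∞) p) (hp0 : p 0 = 0) (hdp : fderiv ℝ p 0 = 0)
    (hHess : ∀ v : E, v ≠ 0 → 0 < iteratedFDeriv ℝ 2 p 0 ![v, v]) :
    ∃ c, 0 < c ∧ ∃ δ, 0 < δ ∧ ∀ x, ‖x‖ < δ → c * ‖x‖ ^ 2 ≤ p x := by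
  set D := fderiv ℝ (fderiv ℝ p) 0 with hD
  have hpos : ∀ v : E, v ≠ 0 → 0 < D v v := fun v hv => by
    simpa [iteratedFDeriv_two_apply] using hHess v hv
  have hsymm : ∀ v w, D v w = D w v := fun v w =>
    (hp.contDiffAt.isSymmSndFDerivAt
      (by simpa using WithTop.coe_le_coe.2 (le_top : (2 : ℕ∞) ≤ ⊤))) v w
  have hcont : Continuous fun v : E => D v v := by fun_prop
  obtain ⟨c, hc, hcs⟩ := (isCompact_sphere (0 : E) 1).exists_forall_le' hcont.continuousOn
    (a := 0) (fun v hv => hpos v (by rintro rfl; simp at hv))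
  have hcoer : ∀ v : E, c * ‖v‖ ^ 2 ≤ D v v := fun v => by
    rcases eq_or_ne v 0 with rfl | hv
    · simp
    have hv' : ‖v‖ ≠ 0 := norm_ne_zero_iff.2 hv
    have h := hcs (‖v‖⁻¹ • v) (by simp [norm_smul, hv'])
    simp only [map_smul, smul_apply, smul_eq_mul] at h
    calc c * ‖v‖ ^ 2 ≤ (‖v‖⁻¹ * (‖v‖⁻¹ * D v v)) * ‖v‖ ^ 2 := by gcongr
      _ = D v v := by field_simp
  have hdp' : HasFDerivAt (fderiv ℝ p) D 0 :=
    ((hp.fderiv_right (m := (⊤ : ℕ∞)) (by simp)).differentiable (by simp) 0).hasFDerivAt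
  have hlo := hdp'.isLittleO.def (c := c / 4) (by positivity)
  obtain ⟨δ, hδ, h⟩ := Metric.eventually_nhds_iff.1 hlo
  have hq : ∀ x, HasFDerivAt (fun x => p x - (1 / 2) * D x x) (fderiv ℝ p x - D x) x := by
    intro x
    have h1 : HasFDerivAt p (fderiv ℝ p x) x := (hp.differentiable (by simp) x).hasFDerivAt
    have h2 : HasFDerivAt (fun x => D x x) _ x := D.hasFDerivAt.clm_apply (hasFDerivAt_id x)
    refine (h1.sub (h2.const_mul (1 / 2))).congr_fderiv ?_
    ext v
    simp [hsymm v x]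
    ring
  refine ⟨c / 4, by positivity, δ, hδ, fun x hx => ?_⟩
  have h3 := norm_le_pow_succ_of_fderiv (m := 1) (C := c / 4) (δ := δ) (by positivity)
    (fun x => (hq x).differentiableAt) (by simp [hp0])
    (fun y hy => by
      have := h (y := y) (by simpa using hy)
      rw [(hq y).fderiv]
      simpa [hdp] using this) hx
  rw [Real.norm_eq_abs] at h3
  have h4 := (abs_le.1 h3).1
  have h5 := hcoer x
  norm_num at h4
  linarith

/-- The numerator obtained when differentiating `(p ^ n)⁻¹ • g` by the quotient rule. -/
noncomputable def quotientNumerator (p : E → ℝ) (n : ℕ) (g : E → F) (x : E) : E →L[ℝ] F :=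
  p x • fderiv ℝ g x - ((n : ℝ) • fderiv ℝ p x).smulRight (g x)

theorem FlatAtZero.quotientNumerator {p : E → ℝ} (hp : ContDiff ℝ (⊤ : ℕ∞) p) (n : ℕ)
    {g : E → F} (hg : FlatAtZero g) : FlatAtZero (quotientNumerator p n g) := by
  have h1 := hg.fderiv.bilinear (ContinuousLinearMap.lsmul ℝ ℝ) hp
  have h2 := hg.bilinear (ContinuousLinearMap.smulRightL ℝ E F)
    (((hp.fderiv_right (m := (⊤ : ℕ∞)) (by simp))).const_smul (n : ℝ))
  exact h1.sub h2

/-- The derivative of a flat quotient is a flat quotient. At the origin this uses that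
the right-hand side has the junk value `0`. -/
theorem hasFDerivAt_quotient {p : E → ℝ} {c δ : ℝ} (hc : 0 < c)
    (hp : ContDiff ℝ (⊤ : ℕ∞) p) (hp0 : p 0 = 0)
    (hlow : ∀ x, ‖x‖ < δ → c * ‖x‖ ^ 2 ≤ p x) (hδ : 0 < δ) (n : ℕ) {g : E → F}
    (hg : FlatAtZero g) {x : E} (hx : ‖x‖ < δ) :
    HasFDerivAt (fun x => (p x ^ n)⁻¹ • g x)
      ((p x ^ (n + 1))⁻¹ • quotientNumerator p n g x) x := by
  rcases eq_or_ne x 0 with rfl | hx0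
  · obtain ⟨C, hC, η, hη, h⟩ := hg.exists_bound (2 * n + 2)
    rw [hp0, zero_pow n.succ_ne_zero, inv_zero, zero_smul]
    refine Asymptotics.IsBigO.hasFDerivAt (n := 2) ?_ one_lt_two
    refine Asymptotics.IsBigO.of_bound (C / c ^ n) ?_
    filter_upwards [Metric.ball_mem_nhds (0 : E) hδ, Metric.ball_mem_nhds (0 : E) hη]
      with y hy hy'
    rw [mem_ball_zero_iff] at hy hy'
    rcases eq_or_ne y 0 with rfl | hy0
    · simp [hg.apply_zero]
    have hn : 0 < ‖y‖ := norm_pos_iff.2 hy0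
    have hl := hlow y hy
    have hpp : 0 < c * ‖y‖ ^ 2 := by positivity
    have hpy : 0 < p y := hpp.trans_le hl
    rw [norm_smul, norm_inv, norm_pow, Real.norm_of_nonneg hpy.le, sub_zero, norm_pow, norm_norm]
    calc (p y ^ n)⁻¹ * ‖g y‖ ≤ ((c * ‖y‖ ^ 2) ^ n)⁻¹ * (C * ‖y‖ ^ (2 * n + 2)) := by
          gcongr
          exact h y hy'
      _ = C / c ^ n * ‖y‖ ^ 2 := by
          rw [mul_pow, ← pow_mul, pow_add]
          field_simp
  · have hn : 0 < ‖x‖ := norm_pos_iff.2 hx0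
    have hpx : 0 < p x := lt_of_lt_of_le (by positivity) (hlow x hx)
    have h1 : HasFDerivAt p (fderiv ℝ p x) x := (hp.differentiable (by simp) x).hasFDerivAt
    have h2 : HasFDerivAt g (fderiv ℝ g x) x :=
      (hg.contDiff.differentiable (by simp) x).hasFDerivAt
    have h3 := ((hasDerivAt_pow n (p x)).inv (pow_pos hpx n).ne').comp_hasFDerivAt x h1
    refine (h3.smul h2).congr_fderiv ?_
    have h4 : -((n : ℝ) * p x ^ (n - 1)) / (p x ^ n) ^ 2 = -((p x ^ (n + 1))⁻¹ * n) := by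
      rcases n with _ | n
      · simp
      · simp only [Nat.add_sub_cancel]
        field_simp
        ring
    have h5 : (p x ^ n)⁻¹ = (p x ^ (n + 1))⁻¹ * p x := by
      field_simp
      ring
    ext v
    simp only [Function.comp_apply, Pi.inv_apply, quotientNumerator, h4, h5,
      add_apply, sub_apply,
      smul_apply, ContinuousLinearMap.smulRight_apply, smul_eq_mul]
    module

theorem contDiffOn_quotient {p : E → ℝ} {c δ : ℝ} (hc : 0 < c)
    (hp : ContDiff ℝ (⊤ : ℕ∞) p) (hp0 : p 0 = 0)
    (hlow : ∀ x, ‖x‖ < δ → c * ‖x‖ ^ 2 ≤ p x) (hδ : 0 < δ) (k : ℕ) :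
    ∀ {F : Type} [NormedAddCommGroup F] [NormedSpace ℝ F] (n : ℕ) {g : E → F},
      FlatAtZero g → ContDiffOn ℝ k (fun x => (p x ^ n)⁻¹ • g x) (Metric.ball 0 δ) := by
  induction k with
  | zero =>
    intro F _ _ n g hg
    refine contDiffOn_zero.2 fun x hx => ?_
    exact (hasFDerivAt_quotient hc hp hp0 hlow hδ n hg
      (mem_ball_zero_iff.1 hx)).continuousAt.continuousWithinAt
  | succ k ih =>
    intro F _ _ n g hg
    have hd : ∀ x ∈ Metric.ball (0 : E) δ, _ := fun x hx =>
      hasFDerivAt_quotient hc hp hp0 hlow hδ n hg (mem_ball_zero_iff.1 hx)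
    push_cast
    refine (contDiffOn_succ_iff_fderiv_of_isOpen Metric.isOpen_ball).2
      ⟨fun x hx => (hd x hx).differentiableAt.differentiableWithinAt, by simp, ?_⟩
    exact (ih (n + 1) (hg.quotientNumerator hp n)).congr fun x hx => (hd x hx).fderiv

end

/-- The division step in the proof of Theorem 3.1: a smooth function `r` that is flat at
the non-degenerate minimum `0` of a smooth function `p` (with `p(0)=0`, `dp(0)=0` and
positive definite Hessian) can be written as `r = s·p^N` with `s` smooth, near `0`. -/
theorem stmt13 (d N : ℕ) (hd : 1 ≤ d) (hN : 1 ≤ N)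
    (p r : EuclideanSpace ℝ (Fin d) → ℝ)
    (hp : ContDiff ℝ (⊤ : ℕ∞) p) (hp0 : p 0 = 0) (hdp : fderiv ℝ p 0 = 0)
    (hHess : ∀ v : EuclideanSpace ℝ (Fin d), v ≠ 0 →
      0 < iteratedFDeriv ℝ 2 p 0 ![v, v])
    (hr : ContDiff ℝ (⊤ : ℕ∞) r) (hflat : ∀ m : ℕ, iteratedFDeriv ℝ m r 0 = 0) :
    ∃ U : Set (EuclideanSpace ℝ (Fin d)), IsOpen U ∧ (0 : EuclideanSpace ℝ (Fin d)) ∈ U ∧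
      ∃ s : EuclideanSpace ℝ (Fin d) → ℝ, ContDiffOn ℝ (⊤ : ℕ∞) s U ∧
        ∀ x ∈ U, r x = s x * p x ^ N := by
  obtain ⟨c, hc, δ, hδ, hlow⟩ := exists_quadratic_lower_bound hp hp0 hdp hHess
  have hg : FlatAtZero r := ⟨hr, hflat⟩
  refine ⟨Metric.ball 0 δ, Metric.isOpen_ball, Metric.mem_ball_self hδ,
    fun x => (p x ^ N)⁻¹ • r x,
    contDiffOn_infty.2 fun k => contDiffOn_quotient hc hp hp0 hlow hδ k N hg, fun x hx => ?_⟩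
  rcases eq_or_ne x 0 with rfl | hx0
  · simp [hg.apply_zero]
  have hn : 0 < ‖x‖ := norm_pos_iff.2 hx0
  have hpx : 0 < p x := lt_of_lt_of_le (by positivity) (hlow x (mem_ball_zero_iff.1 hx))
  simp only [smul_eq_mul]
  field_simp
end
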